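/- arXiv:2310.17628 — 5 statements merged into one kernel-verified Lean document; each statement's English description precedes it below -/
import Mathlib

section
/- Let K be an algebraically closed field with a nonarchimedean multiplicative absolute value |·|. Let a ∈ K, r > 0, and let f ∈ K[y] be a nonzero polynomial with Taylor expansion f = Σᵢ cᵢ(y−a)ⁱ about a. If b ∈ K satisfies |b−a| ≤ r and |b−z| ≥ r for every root z of f, then |f(b)| = maxᵢ |cᵢ| rⁱ. In particular, the Gauss norm ‖f‖_{ζ(a,r)} is attained by |f(b)| at every point b of the closed disk D̄(a,r) lying outside the finitely many open disks D(z,r) centred at roots z of f. -/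
/-- A nonarchimedean multiplicative absolute value on a commutative ring. -/
def IsNAAbsValue {R : Type*} [CommRing R] (v : R → ℝ) : Prop :=
  (∀ x, 0 ≤ v x) ∧ (∀ x, v x = 0 ↔ x = 0) ∧ (∀ x y, v (x * y) = v x * v y) ∧
    (∀ x y, v (x + y) ≤ max (v x) (v y))

/-!
Expanding about `a` turns `‖·‖_{ζ(a,r)}` into the Gauss norm of radius `r`, which is
multiplicative, as is `f ↦ |f(b)|`. The two therefore agree on `f` as soon as they agree on its
linear factors, where the claim is `max(r, |a - z|) = |b - z|`: this is the ultrametric inequality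
for the points `a, b, z`, given `|b - a| ≤ r ≤ |b - z|`. (Multiplicativity needs `r > 0`; if
`r = 0`, then `b = a`.)
-/

section

open Polynomial

variable {R : Type*}

namespace IsNAAbsValue

variable [CommRing R] {abv : R → ℝ}

/-- The bundled `AbsoluteValue` of a nonarchimedean absolute value, giving access to the library's
Gauss norm. -/
def toAbsoluteValue (h : IsNAAbsValue abv) : AbsoluteValue R ℝ where
  toFun := abv
  nonneg' := h.1
  eq_zero' := h.2.1
  map_mul' := h.2.2.1
  add_le' x y := (h.2.2.2 x y).trans (max_le_add_of_nonneg (h.1 x) (h.1 y))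

theorem isNonarchimedean_toAbsoluteValue (h : IsNAAbsValue abv) :
    IsNonarchimedean h.toAbsoluteValue :=
  h.2.2.2

end IsNAAbsValue

theorem max_abv_eq_of_abv_sub_le [Ring R] {v : AbsoluteValue R ℝ} (hv : IsNonarchimedean v)
    {x y : R} {r : ℝ} (hxy : v (x - y) ≤ r) (hx : r ≤ v x) : max r (v y) = v x := by
  apply le_antisymm
  · have hy : v y ≤ max (v (y - x)) (v x) := by simpa using hv (y - x) x
    rw [v.map_sub] at hy
    exact max_le hx (hy.trans (max_le (hxy.trans hx) le_rfl))
  · calc v x = v ((x - y) + y) := by rw [sub_add_cancel]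
      _ ≤ max (v (x - y)) (v y) := hv _ _
      _ ≤ max r (v y) := max_le_max_right _ hxy

theorem iSup_coeff_mul_pow_eq_gaussNorm [Semiring R] {F : Type*} [FunLike F R ℝ]
    [ZeroHomClass F R ℝ] [NonnegHomClass F R ℝ] (v : F) {c : ℝ} (hc : 0 ≤ c) (p : R[X]) :
    ⨆ i : ℕ, v (p.coeff i) * c ^ i = p.gaussNorm v c := by
  simp only [← gaussNorm_coe_powerSeries v p hc, PowerSeries.gaussNorm_eq, coeff_coe]

theorem gaussNorm_X_add_C [Semiring R] [Nontrivial R] {v : AbsoluteValue R ℝ}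
    (hv : IsNonarchimedean v) {c : ℝ} (hc : 0 ≤ c) (z : R) :
    (X + C z).gaussNorm v c = max c (v z) := by
  apply le_antisymm
  · have hX : gaussNorm v c X = c := by
      rw [← monomial_one_one_eq_X, gaussNorm_monomial, v.map_one, one_mul, pow_one]
    simpa only [hX, gaussNorm_C] using isNonarchimedean_gaussNorm v hv hc X (C z)
  · have hcoeff := (X + C z).le_gaussNorm v hc
    exact max_le (by simpa using hcoeff 1) (by simpa using hcoeff 0)

theorem gaussNorm_taylor_X_add_C_eq_abv_add [CommRing R] [Nontrivial R] {v : AbsoluteValue R ℝ}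
    (hv : IsNonarchimedean v) {a b w : R} {r : ℝ} (hb : v (b - a) ≤ r) (hw : r ≤ v (b + w)) :
    (taylor a (X + C w)).gaussNorm v r = v (b + w) := by
  have htaylor : taylor a (X + C w) = X + C (a + w) := by
    rw [map_add, taylor_X, taylor_C, C_add, add_assoc]
  rw [htaylor, gaussNorm_X_add_C hv ((v.nonneg _).trans hb)]
  exact max_abv_eq_of_abv_sub_le hv (by rwa [add_sub_add_right_eq_sub]) hw

theorem abv_eval_eq_gaussNorm_taylor [CommRing R] [Nontrivial R] {v : AbsoluteValue R ℝ}
    (hv : IsNonarchimedean v) {a b : R} {r : ℝ} (hb : v (b - a) ≤ r) {f : R[X]} (hf : f.Splits)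
    (hroots : ∀ z, f.IsRoot z → r ≤ v (b - z)) :
    v (f.eval b) = (taylor a f).gaussNorm v r := by
  obtain rfl | hr := ((v.nonneg _).trans hb).eq_or_lt
  · have hba : b = a := (v.map_sub_eq_zero_iff b a).mp (hb.antisymm (v.nonneg _))
    rw [hba, gaussNorm_zero_right, taylor_coeff_zero]
  · induction hf using Submonoid.closure_induction with
    | mem g hg =>
      obtain ⟨c, rfl⟩ | ⟨w, rfl⟩ := hg
      · rw [eval_C, taylor_C, gaussNorm_C]
      · have hw : r ≤ v (b + w) := by simpa using hroots (-w) (by simp)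
        rw [gaussNorm_taylor_X_add_C_eq_abv_add hv hb hw, eval_add, eval_X, eval_C]
    | one => rw [eval_one, taylor_one, gaussNorm_C]
    | mul g h _ _ ihg ihh =>
      rw [eval_mul, v.map_mul, taylor_mul, gaussNorm_mul hv hr,
        ihg fun z hz ↦ hroots z (root_mul_right_of_isRoot h hz),
        ihh fun z hz ↦ hroots z (root_mul_left_of_isRoot g hz)]

theorem stmt5_general [CommRing R] [Nontrivial R] (abv : R → ℝ) (habv : IsNAAbsValue abv)
    (a : R) (r : ℝ) (f : R[X]) (hf : f.Splits) (b : R) (hb : abv (b - a) ≤ r)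
    (hroots : ∀ z, f.IsRoot z → r ≤ abv (b - z)) :
    abv (f.eval b) = ⨆ i : ℕ, abv ((taylor a f).coeff i) * r ^ i :=
  (abv_eval_eq_gaussNorm_taylor habv.isNonarchimedean_toAbsoluteValue hb hf hroots).trans
    (iSup_coeff_mul_pow_eq_gaussNorm habv.toAbsoluteValue ((habv.1 _).trans hb) _).symm

end

/-- Over an algebraically closed nonarchimedean field, if `b` lies in the closed disk
`D̄(a,r)` and `|b - z| ≥ r` for every root `z` of the nonzero polynomial `f`, then
`|f(b)|` equals the Gauss norm `max_i |c_i| r^i`, where `c_i` are the Taylor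
coefficients of `f` about `a`. -/
theorem stmt5 {K : Type*} [Field K] [IsAlgClosed K] (abv : K → ℝ) (habv : IsNAAbsValue abv)
    (a : K) (r : ℝ) (hr : 0 < r) (f : Polynomial K) (hf : f ≠ 0)
    (b : K) (hb : abv (b - a) ≤ r)
    (hroots : ∀ z : K, f.IsRoot z → r ≤ abv (b - z)) :
    abv (Polynomial.eval b f)
      = ⨆ i : ℕ, abv ((Polynomial.taylor a f).coeff i) * r ^ i := by
  exact stmt5_general abv habv a r f (IsAlgClosed.splits f) b hb hroots
end

section
/- Let K be a field with a nonarchimedean multiplicative absolute value |·| and let r > 0. For a nonzero polynomial f = Σᵢ cᵢ yⁱ ∈ K[y], define the Weierstrass degree wdeg_r(f) to be the largest index d such that |c_d| r^d = maxᵢ |cᵢ| rⁱ. Then for all nonzero polynomials f, g ∈ K[y], wdeg_r(f·g) = wdeg_r(f) + wdeg_r(g). -/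
/-- The Weierstrass degree of `f = Σᵢ cᵢ yⁱ` at radius `r`: the largest index `d` with
`|c_d| r^d = maxᵢ |cᵢ| rⁱ`. -/
noncomputable def wdeg {K : Type*} [Field K] (abv : K → ℝ) (r : ℝ) (f : Polynomial K) : ℕ :=
  sSup {d : ℕ | abv (f.coeff d) * r ^ d = ⨆ i : ℕ, abv (f.coeff i) * r ^ i}

/-!
For small `s > r` the last dominant term of `f` at radius `r` becomes the only dominant one, so
`|f|_s = |f|_r * (s / r) ^ d` with `d` the Weierstrass degree: `d` is the right slope at `r` of the
Gauss norm in logarithmic coordinates. The Gauss norm being multiplicative at every radius, these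
slopes add up under multiplication of polynomials.
-/

open Filter Topology
open scoped Polynomial

section GaussNorm

variable {R F : Type*} [Semiring R] [FunLike F R ℝ] {v : F} {r : ℝ} {f : R[X]}

/-- The Weierstrass degree over an arbitrary semiring, the maximum of the `v (f.coeff i) * r ^ i`
being encoded as the Gauss norm. It is a junk value when the Gauss norm of `f` vanishes. -/
noncomputable def weierstrassDegree (v : F) (r : ℝ) (f : R[X]) : ℕ :=
  sSup {d : ℕ | v (f.coeff d) * r ^ d = f.gaussNorm v r}

variable [ZeroHomClass F R ℝ]

theorem gaussNorm_le {B : ℝ} (hB : 0 ≤ B) (h : ∀ i ∈ f.support, v (f.coeff i) * r ^ i ≤ B) :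
    f.gaussNorm v r ≤ B := by
  obtain ⟨i, hi⟩ := f.exists_eq_gaussNorm v r
  rw [hi]
  by_cases hmem : i ∈ f.support
  · exact h i hmem
  · rwa [Polynomial.notMem_support_iff.mp hmem, map_zero, zero_mul]

theorem isGreatest_weierstrassDegree (hf : f.gaussNorm v r ≠ 0) :
    IsGreatest {d : ℕ | v (f.coeff d) * r ^ d = f.gaussNorm v r} (weierstrassDegree v r f) := by
  have hne : {d : ℕ | v (f.coeff d) * r ^ d = f.gaussNorm v r}.Nonempty :=
    (f.exists_eq_gaussNorm v r).imp fun _ hd ↦ hd.symm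
  have hbdd : BddAbove {d : ℕ | v (f.coeff d) * r ^ d = f.gaussNorm v r} := by
    refine ⟨f.natDegree, fun d hd ↦ ?_⟩
    by_contra! hlt
    rw [Set.mem_ofPred_eq, f.coeff_eq_zero_of_natDegree_lt hlt, map_zero, zero_mul] at hd
    exact hf hd.symm
  exact ⟨Nat.sSup_mem hne hbdd, fun _ hd ↦ le_csSup hbdd hd⟩

variable [NonnegHomClass F R ℝ]

theorem gaussNorm_eq_iSup (v : F) (hr : 0 ≤ r) (f : R[X]) :
    f.gaussNorm v r = ⨆ i : ℕ, v (f.coeff i) * r ^ i := by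
  simp only [← f.gaussNorm_coe_powerSeries v hr, PowerSeries.gaussNorm_eq, Polynomial.coeff_coe]

theorem coeff_mul_pow_lt_gaussNorm (hr : 0 ≤ r) (hf : f.gaussNorm v r ≠ 0) {i : ℕ}
    (hi : weierstrassDegree v r f < i) : v (f.coeff i) * r ^ i < f.gaussNorm v r :=
  (f.le_gaussNorm v hr i).lt_of_ne fun h ↦ hi.not_ge ((isGreatest_weierstrassDegree hf).2 h)

theorem eventually_coeff_mul_pow_le (hr : 0 < r) (hf : f.gaussNorm v r ≠ 0) (i : ℕ) :
    ∀ᶠ s in 𝓝[>] r,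
      v (f.coeff i) * s ^ i ≤ f.gaussNorm v r * (s / r) ^ weierstrassDegree v r f := by
  rcases le_or_gt i (weierstrassDegree v r f) with hi | hi
  · filter_upwards [self_mem_nhdsWithin] with s hs
    have hone : 1 ≤ s / r := (one_le_div hr).mpr (le_of_lt hs)
    calc v (f.coeff i) * s ^ i
        = v (f.coeff i) * r ^ i * (s / r) ^ i := by
          rw [mul_assoc, ← mul_pow, mul_div_cancel₀ s hr.ne']
      _ ≤ f.gaussNorm v r * (s / r) ^ weierstrassDegree v r f :=
        mul_le_mul (f.le_gaussNorm v hr.le i) (pow_le_pow_right₀ hone hi)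
          (pow_nonneg (zero_le_one.trans hone) i) (f.gaussNorm_nonneg v hr.le)
  · have hlt : v (f.coeff i) * r ^ i <
        f.gaussNorm v r * (r / r) ^ weierstrassDegree v r f := by
      simpa only [div_self hr.ne', one_pow, mul_one] using coeff_mul_pow_lt_gaussNorm hr.le hf hi
    have hnhds : ∀ᶠ s in 𝓝 r, v (f.coeff i) * s ^ i <
        f.gaussNorm v r * (s / r) ^ weierstrassDegree v r f :=
      ContinuousAt.eventually_lt (by fun_prop) (by fun_prop) hlt
    exact (hnhds.filter_mono nhdsWithin_le_nhds).mono fun _ ↦ le_of_lt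

theorem eventually_gaussNorm_eq_mul_pow_weierstrassDegree (hr : 0 < r)
    (hf : f.gaussNorm v r ≠ 0) :
    ∀ᶠ s in 𝓝[>] r,
      f.gaussNorm v s = f.gaussNorm v r * (s / r) ^ weierstrassDegree v r f := by
  have hterms := (eventually_all_finset f.support).mpr fun i _ ↦
    eventually_coeff_mul_pow_le hr hf i
  filter_upwards [hterms, self_mem_nhdsWithin] with s hle hs
  have hs0 : 0 < s := hr.trans hs
  refine le_antisymm (gaussNorm_le ?_ hle) ?_
  · exact mul_nonneg (f.gaussNorm_nonneg v hr.le) (pow_nonneg (div_pos hs0 hr).le _)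
  · calc f.gaussNorm v r * (s / r) ^ weierstrassDegree v r f
        = v (f.coeff (weierstrassDegree v r f)) * r ^ weierstrassDegree v r f *
            (s / r) ^ weierstrassDegree v r f := by rw [(isGreatest_weierstrassDegree hf).1]
      _ = v (f.coeff (weierstrassDegree v r f)) * s ^ weierstrassDegree v r f := by
          rw [mul_assoc, ← mul_pow, mul_div_cancel₀ s hr.ne']
      _ ≤ f.gaussNorm v s := f.le_gaussNorm v hs0.le _

end GaussNorm

theorem wdeg_eq_weierstrassDegree {K F : Type*} [Field K] [FunLike F K ℝ] [ZeroHomClass F K ℝ]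
    [NonnegHomClass F K ℝ] (v : F) {r : ℝ} (hr : 0 ≤ r) (f : K[X]) :
    wdeg v r f = weierstrassDegree v r f := by
  simp only [wdeg, weierstrassDegree, gaussNorm_eq_iSup v hr]

/-- The bundled absolute value with underlying function `v`, through which Mathlib's Gauss norm
applies to `v`. -/
def IsNAAbsValue.toAbsoluteValue_s7 {R : Type*} [CommRing R] {v : R → ℝ} (hv : IsNAAbsValue v) :
    AbsoluteValue R ℝ where
  toFun := v
  map_mul' := hv.2.2.1
  nonneg' := hv.1
  eq_zero' := hv.2.1
  add_le' _ _ := IsNonarchimedean.add_le hv.1 hv.2.2.2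

theorem stmt7_general {R : Type*} [Ring R] {v : AbsoluteValue R ℝ} (hv : IsNonarchimedean v)
    {r : ℝ} (hr : 0 < r) {f g : R[X]} (hf : f ≠ 0) (hg : g ≠ 0) :
    weierstrassDegree v r (f * g) = weierstrassDegree v r f + weierstrassDegree v r g := by
  have norm_ne_zero {p : R[X]} (hp : p ≠ 0) : p.gaussNorm v r ≠ 0 :=
    (p.gaussNorm_eq_zero_iff v (fun _ ↦ v.eq_zero.mp) hr).not.mpr hp
  have hfg : (f * g).gaussNorm v r ≠ 0 := by
    rw [Polynomial.gaussNorm_mul hv hr]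
    exact mul_ne_zero (norm_ne_zero hf) (norm_ne_zero hg)
  obtain ⟨s, hs, hsfg, hsf, hsg⟩ := (eventually_mem_nhdsWithin.and <|
    (eventually_gaussNorm_eq_mul_pow_weierstrassDegree hr hfg).and <|
    (eventually_gaussNorm_eq_mul_pow_weierstrassDegree hr (norm_ne_zero hf)).and <|
    eventually_gaussNorm_eq_mul_pow_weierstrassDegree hr (norm_ne_zero hg)).exists
  have hone : 1 < s / r := (one_lt_div hr).mpr hs
  apply pow_right_injective₀ (zero_lt_one.trans hone) hone.ne'
  apply mul_left_cancel₀ hfg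
  calc (f * g).gaussNorm v r * (s / r) ^ weierstrassDegree v r (f * g)
      = f.gaussNorm v s * g.gaussNorm v s := by
        rw [← hsfg, Polynomial.gaussNorm_mul hv (hr.trans hs)]
    _ = f.gaussNorm v r * g.gaussNorm v r *
          (s / r) ^ (weierstrassDegree v r f + weierstrassDegree v r g) := by
        rw [hsf, hsg, mul_mul_mul_comm, pow_add]
    _ = (f * g).gaussNorm v r *
          (s / r) ^ (weierstrassDegree v r f + weierstrassDegree v r g) := by
        rw [Polynomial.gaussNorm_mul hv hr]

/-- The Weierstrass degree is additive: `wdeg_r (f·g) = wdeg_r f + wdeg_r g` for nonzero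
polynomials `f, g` over a field with a nonarchimedean multiplicative absolute value. -/
theorem stmt7 {K : Type*} [Field K] (abv : K → ℝ) (habv : IsNAAbsValue abv)
    (r : ℝ) (hr : 0 < r) (f g : Polynomial K) (hf : f ≠ 0) (hg : g ≠ 0) :
    wdeg abv r (f * g) = wdeg abv r f + wdeg abv r g := by
  have h := stmt7_general (v := habv.toAbsoluteValue_s7) habv.2.2.2 hr hf hg
  rwa [← wdeg_eq_weierstrassDegree _ hr.le, ← wdeg_eq_weierstrassDegree _ hr.le,
    ← wdeg_eq_weierstrassDegree _ hr.le] at h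
end

section
/- Let K be a field with a nonarchimedean multiplicative absolute value |·|, and let (D̄(aₙ,rₙ))ₙ and (D̄(bₙ,sₙ))ₙ (with all rₙ, sₙ > 0) be two nested decreasing sequences of closed disks that are equivalent, meaning: for every n there is N with D̄(b_N,s_N) ⊆ D̄(aₙ,rₙ), and for every n there is N with D̄(a_N,r_N) ⊆ D̄(bₙ,sₙ). Then for every polynomial f ∈ K[y], infₙ ‖f‖_{ζ(aₙ,rₙ)} = infₙ ‖f‖_{ζ(bₙ,sₙ)}; that is, equivalent nested sequences of closed disks define the same Type IV norm. -/
/-!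
The Gauss norm on a disk is monotone under inclusion of disks: recentring `y ↦ y + c` with `|c| ≤ r`
does not increase the Gauss norm of radius `r`, because `y + c` itself has norm at most `r`, and
shrinking the radius does not increase it either. Equivalent sequences of disks are mutually
cofinal, so the two infima bound each other.
-/

open Polynomial

section Taylor

variable {F R : Type*} [Semiring R] [FunLike F R ℝ] [NonnegHomClass F R ℝ] {v : F}

theorem gaussNorm_le_gaussNorm_of_radius_le [ZeroHomClass F R ℝ] {r s : ℝ} (hs : 0 ≤ s)
    (hsr : s ≤ r) (p : R[X]) : p.gaussNorm v s ≤ p.gaussNorm v r := by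
  obtain ⟨i, hi⟩ := p.exists_eq_gaussNorm v s
  calc p.gaussNorm v s = v (p.coeff i) * s ^ i := hi
    _ ≤ v (p.coeff i) * r ^ i := by gcongr
    _ ≤ p.gaussNorm v r := p.le_gaussNorm v (hs.trans hsr) i

variable [MonoidWithZeroHomClass F R ℝ] {r : ℝ} {c : R}

theorem gaussNorm_X_add_C_le (hna : IsNonarchimedean v) (hc : v c ≤ r) :
    (X + C c).gaussNorm v r ≤ r := by
  have hX : (X : R[X]).gaussNorm v r = r := by
    rw [← monomial_one_one_eq_X, gaussNorm_monomial, map_one, one_mul, pow_one]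
  have hr : 0 ≤ r := (apply_nonneg v c).trans hc
  calc (X + C c).gaussNorm v r ≤ max (X.gaussNorm v r) ((C c).gaussNorm v r) :=
        isNonarchimedean_gaussNorm v hna hr X (C c)
    _ = max r (v c) := by rw [hX, gaussNorm_C]
    _ = r := max_eq_left hc

theorem gaussNorm_taylor_monomial_le (hna : IsNonarchimedean v) (hc : v c ≤ r) (n : ℕ) (x : R) :
    (taylor c (monomial n x)).gaussNorm v r ≤ v x * r ^ n := by
  have hr : 0 ≤ r := (apply_nonneg v c).trans hc
  rw [taylor_monomial]
  induction n with
  | zero => simp only [pow_zero, mul_one, gaussNorm_C, le_refl]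
  | succ n ih =>
    rw [pow_succ, ← mul_assoc, pow_succ, ← mul_assoc]
    calc (C x * (X + C c) ^ n * (X + C c)).gaussNorm v r
        ≤ (C x * (X + C c) ^ n).gaussNorm v r * (X + C c).gaussNorm v r :=
          gaussNorm_mul_le v hna _ _ hr
      _ ≤ v x * r ^ n * r :=
          mul_le_mul ih (gaussNorm_X_add_C_le hna hc) (gaussNorm_nonneg v _ hr) (by positivity)

theorem gaussNorm_taylor_le (hna : IsNonarchimedean v) (hc : v c ≤ r) (p : R[X]) :
    (taylor c p).gaussNorm v r ≤ p.gaussNorm v r := by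
  have hr : 0 ≤ r := (apply_nonneg v c).trans hc
  have taylor_eq_sum :
      taylor c p = ∑ n ∈ p.support, taylor c (monomial n (p.coeff n)) := by
    rw [← map_sum, ← p.as_sum_support]
  obtain ⟨n, -, hn⟩ := (isNonarchimedean_gaussNorm v hna hr).finset_image_add
    (gaussNorm_zero v r) (fun q => gaussNorm_nonneg v q hr)
    (fun n => taylor c (monomial n (p.coeff n))) p.support
  calc (taylor c p).gaussNorm v r
      ≤ (taylor c (monomial n (p.coeff n))).gaussNorm v r := by rwa [taylor_eq_sum]
    _ ≤ v (p.coeff n) * r ^ n := gaussNorm_taylor_monomial_le hna hc n _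
    _ ≤ p.gaussNorm v r := p.le_gaussNorm v hr n

end Taylor

/-- The Gauss norm `‖f‖_{ζ(a,r)}` of a polynomial on the closed disk `D̄(a,r)`. The maximum over
the coefficients of the Taylor expansion at `a` is encoded as a supremum over all exponents, and
`v` is an arbitrary real-valued function so that both bundled and unbundled absolute values apply.
-/
noncomputable def diskGaussNorm {R : Type*} [Semiring R] (v : R → ℝ) (a : R) (r : ℝ) (f : R[X]) :
    ℝ :=
  ⨆ i : ℕ, v ((taylor a f).coeff i) * r ^ i

section Semiring

variable {F R : Type*} [Semiring R] [FunLike F R ℝ] [ZeroHomClass F R ℝ] [NonnegHomClass F R ℝ]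
  {v : F}

theorem diskGaussNorm_eq_gaussNorm_taylor {r : ℝ} (hr : 0 ≤ r) (a : R) (f : R[X]) :
    diskGaussNorm v a r f = (taylor a f).gaussNorm v r := by
  simp only [← gaussNorm_coe_powerSeries v _ hr, PowerSeries.gaussNorm_eq, coeff_coe,
    diskGaussNorm]

theorem diskGaussNorm_nonneg {r : ℝ} (hr : 0 ≤ r) (a : R) (f : R[X]) :
    0 ≤ diskGaussNorm v a r f := by
  rw [diskGaussNorm_eq_gaussNorm_taylor hr]
  exact gaussNorm_nonneg v _ hr

end Semiring

section CommRing

variable {F R : Type*} [CommRing R] [FunLike F R ℝ] [MulRingSeminormClass F R ℝ] {v : F}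

theorem diskGaussNorm_mono (hna : IsNonarchimedean v) {a b : R} {r s : ℝ} (hs : 0 ≤ s)
    (hab : v (a - b) ≤ r) (hsr : s ≤ r) (f : R[X]) :
    diskGaussNorm v b s f ≤ diskGaussNorm v a r f := by
  have recentre : taylor b f = taylor (b - a) (taylor a f) := by
    rw [taylor_taylor, sub_add_cancel]
  have hba : v (b - a) ≤ r := by rwa [map_sub_rev]
  rw [diskGaussNorm_eq_gaussNorm_taylor hs, diskGaussNorm_eq_gaussNorm_taylor (hs.trans hsr)]
  calc (taylor b f).gaussNorm v s ≤ (taylor b f).gaussNorm v r :=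
        gaussNorm_le_gaussNorm_of_radius_le hs hsr _
    _ = (taylor (b - a) (taylor a f)).gaussNorm v r := by rw [recentre]
    _ ≤ (taylor a f).gaussNorm v r := gaussNorm_taylor_le hna hba _

variable {ι κ : Type*} {a : ι → R} {b : κ → R} {r : ι → ℝ} {s : κ → ℝ}

theorem iInf_diskGaussNorm_le_of_cofinal [Nonempty ι] (hna : IsNonarchimedean v)
    (hs : ∀ m, 0 ≤ s m) (hab : ∀ n, ∃ m, v (a n - b m) ≤ r n ∧ s m ≤ r n) (f : R[X]) :
    ⨅ m, diskGaussNorm v (b m) (s m) f ≤ ⨅ n, diskGaussNorm v (a n) (r n) f := by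
  have bddBelow : BddBelow (Set.range fun m => diskGaussNorm v (b m) (s m) f) :=
    ⟨0, Set.forall_mem_range.2 fun m => diskGaussNorm_nonneg (hs m) (b m) f⟩
  refine le_ciInf fun n => ?_
  obtain ⟨m, hcentre, hradius⟩ := hab n
  exact ciInf_le_of_le bddBelow m (diskGaussNorm_mono hna (hs m) hcentre hradius f)

theorem stmt9_general [Nonempty ι] (hna : IsNonarchimedean v)
    (hab : ∀ n, ∃ m, v (a n - b m) ≤ r n ∧ s m ≤ r n)
    (hba : ∀ m, ∃ n, v (b m - a n) ≤ s m ∧ r n ≤ s m) (f : R[X]) :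
    ⨅ n, diskGaussNorm v (a n) (r n) f = ⨅ m, diskGaussNorm v (b m) (s m) f := by
  have hr : ∀ n, 0 ≤ r n := fun n => (hab n).elim fun _ h => (apply_nonneg v _).trans h.1
  have hs : ∀ m, 0 ≤ s m := fun m => (hba m).elim fun _ h => (apply_nonneg v _).trans h.1
  have : Nonempty κ := (hab (Classical.arbitrary ι)).nonempty
  exact le_antisymm (iInf_diskGaussNorm_le_of_cofinal hna hr hba f)
    (iInf_diskGaussNorm_le_of_cofinal hna hs hab f)

end CommRing

/-- The multiplicative ring norm given by a nonarchimedean absolute value, through which Mathlib's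
theory of Gauss norms applies to the unbundled predicate `IsNAAbsValue`. -/
noncomputable def IsNAAbsValue.toMulRingNorm {R : Type*} [CommRing R] [Nontrivial R] {v : R → ℝ}
    (h : IsNAAbsValue v) : MulRingNorm R :=
  MulRingNorm.mulRingNormEquivAbsoluteValue.symm
    { toFun := v
      map_mul' := h.2.2.1
      nonneg' := h.1
      eq_zero' := h.2.1
      add_le' := fun _ _ => IsNonarchimedean.add_le h.1 h.2.2.2 }

/-- Equivalent nested decreasing sequences of closed disks define the same Type IV norm:
if for every `n` there is `N` with `D̄(b_N, s_N) ⊆ D̄(aₙ, rₙ)` (i.e. `|aₙ − b_N| ≤ rₙ` and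
`s_N ≤ rₙ`) and vice versa, then for every polynomial `f` the infima of the Gauss norms
along the two sequences agree. -/
theorem stmt9 {K : Type*} [Field K] (abv : K → ℝ) (habv : IsNAAbsValue abv)
    (a b : ℕ → K) (r s : ℕ → ℝ) (hr : ∀ n, 0 < r n) (hs : ∀ n, 0 < s n)
    (hnesta : ∀ n, abv (a n - a (n + 1)) ≤ r n) (hnestr : ∀ n, r (n + 1) ≤ r n)
    (hnestb : ∀ n, abv (b n - b (n + 1)) ≤ s n) (hnests : ∀ n, s (n + 1) ≤ s n)
    (hab : ∀ n, ∃ N, abv (a n - b N) ≤ r n ∧ s N ≤ r n)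
    (hba : ∀ n, ∃ N, abv (b n - a N) ≤ s n ∧ r N ≤ s n) :
    ∀ f : Polynomial K,
      (⨅ n : ℕ, ⨆ i : ℕ, abv ((Polynomial.taylor (a n) f).coeff i) * r n ^ i)
        = ⨅ n : ℕ, ⨆ i : ℕ, abv ((Polynomial.taylor (b n) f).coeff i) * s n ^ i :=
  stmt9_general (v := habv.toMulRingNorm) habv.2.2.2 hab hba
end

section
/- Let X be an ultrametric space (its metric d satisfies d(x,z) ≤ max(d(x,y), d(y,z)) for all x,y,z), let φ : X → X be an isometry (d(φ(x),φ(y)) = d(x,y) for all x,y), let b ∈ X, and let j ≥ 1 be an integer. Set t := d(φ^j(b), b), and suppose d(φ^n(b), b) ≥ t for every integer n ≥ 1. Then d(φ^{jm}(b), φ^{jn}(b)) = t for all integers m > n ≥ 0; in particular, if t > 0 the points φ^{jn}(b), n ≥ 0, are pairwise at distance exactly t, so infinitely many of them lie in pairwise distinct open balls of radius t. -/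
/-!
Passing from `φ` to its iterate `φ^[j]`, which is again an isometry, reduces the claim to `j = 1`.
For `k ≥ 1`, the ultrametric inequality along the orbit of `b`, whose consecutive points are all at
distance `dist (φ b) b`, gives `dist (φ^[k] b) b ≤ dist (φ b) b`; minimality of the first
displacement gives the reverse inequality, and applying the isometry `φ^[n]` moves the resulting
equality to the pair `φ^[n + k] b`, `φ^[n] b`.
-/

theorem isometry_iterate {X : Type*} [PseudoEMetricSpace X] {f : X → X} (hf : Isometry f) :
    ∀ n : ℕ, Isometry f^[n]
  | 0 => isometry_id
  | n + 1 => (isometry_iterate hf n).comp hf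

section Ultrametric

variable {X : Type*} [PseudoMetricSpace X] [IsUltrametricDist X]

theorem dist_iterate_self_le_of_lipschitzWith_one {f : X → X} (hf : LipschitzWith 1 f) (x : X)
    (n : ℕ) : dist (f^[n] x) x ≤ dist (f x) x := by
  induction n with
  | zero => simp
  | succ n ih =>
    have hstep : dist (f^[n + 1] x) (f x) ≤ dist (f^[n] x) x := by
      simpa [Function.iterate_succ_apply'] using hf.dist_le_mul (f^[n] x) x
    exact (dist_triangle_max _ (f x) _).trans (max_le (hstep.trans ih) le_rfl)

theorem pairwise_dist_iterate_eq {f : X → X} (hf : Isometry f) (x : X)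
    (hmin : ∀ n : ℕ, 1 ≤ n → dist (f x) x ≤ dist (f^[n] x) x) :
    Pairwise fun m n : ℕ ↦ dist (f^[m] x) (f^[n] x) = dist (f x) x := by
  intro m n hmn
  wlog hlt : n < m generalizing m n
  · rw [dist_comm]
    exact this hmn.symm (hmn.lt_of_le (not_lt.mp hlt))
  obtain ⟨k, hk, rfl⟩ := exists_pos_add_of_lt' hlt
  calc dist (f^[n + k] x) (f^[n] x)
      = dist (f^[k] x) x := by
        rw [Function.iterate_add_apply, (isometry_iterate hf n).dist_eq]
    _ = dist (f x) x :=
        (dist_iterate_self_le_of_lipschitzWith_one hf.lipschitz x k).antisymm (hmin k hk)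

theorem stmt11_general {φ : X → X} (hφ : Isometry φ) (b : X) (j : ℕ)
    (hmin : ∀ n : ℕ, 1 ≤ n → dist (φ^[j] b) b ≤ dist (φ^[j * n] b) b) :
    Pairwise fun m n : ℕ ↦ dist (φ^[j * m] b) (φ^[j * n] b) = dist (φ^[j] b) b := by
  simp only [Function.iterate_mul] at hmin ⊢
  exact pairwise_dist_iterate_eq (isometry_iterate hφ j) b hmin

end Ultrametric

/-- In an ultrametric space, if `φ` is an isometry, `t = d(φ^j(b), b)` and
`d(φ^n(b), b) ≥ t` for all `n ≥ 1`, then the points `φ^{jn}(b)` are pairwise at distance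
exactly `t`; in particular, when `t > 0` they lie in pairwise distinct open balls of
radius `t`. -/
theorem stmt11 {X : Type*} [MetricSpace X]
    (hultra : ∀ x y z : X, dist x z ≤ max (dist x y) (dist y z))
    (φ : X → X) (hiso : ∀ x y : X, dist (φ x) (φ y) = dist x y)
    (b : X) (j : ℕ) (hj : 1 ≤ j) (t : ℝ) (ht : t = dist (φ^[j] b) b)
    (hmin : ∀ n : ℕ, 1 ≤ n → t ≤ dist (φ^[n] b) b) :
    (∀ m n : ℕ, n < m → dist (φ^[j * m] b) (φ^[j * n] b) = t) ∧
    (0 < t → ∀ m n : ℕ, m ≠ n → φ^[j * m] b ∉ Metric.ball (φ^[j * n] b) t) := by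
  have : IsUltrametricDist X := ⟨hultra⟩
  have hdist := stmt11_general (Isometry.of_dist_eq hiso) b j fun n hn ↦
    ht ▸ hmin (j * n) (Nat.mul_pos hj hn)
  exact ht ▸ ⟨fun m n hlt ↦ hdist hlt.ne', fun _ m n hne ↦ (hdist hne).ge.not_gt⟩
end

section
/- Let K be a complete, algebraically closed field with a nonarchimedean multiplicative absolute value |·|, let q ≥ 1 be real, and let σ : K → K be a ring automorphism with |σ(a)| = |a|^{1/q} for all a ∈ K. Let a ∈ K, r > 0, and let (cₙ)ₙ ⊂ K satisfy |cₙ| rⁿ → 0, so that f(b) := Σₙ cₙ (b−a)ⁿ converges for every b in the closed disk D̄(a,r); define φ(b) := σ⁻¹(f(b)) for b ∈ D̄(a,r). If the image φ(D̄(a,r)) is a proper subset of D̄(a,r), then φ has a unique fixed point z in D̄(a,r), and moreover the iterates φⁿ(b) converge to z for every b ∈ D̄(a,r). -/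
/-! Dominance of the coefficient of index equal to the Weierstrass degree survives truncation and
recentring at a point of the disk, so the truncations of a power series have roots each of which is
close to the next; hence a restricted power series `f` maps `D̄(0, r)` onto a disk `D̄(f 0, s)`,
where `s` is the supremum of `‖cₙ‖ rⁿ` over `n ≥ 1`, and `f` is `s / r`-Lipschitz there. Therefore
`φ` maps `D̄(a, r)` onto `D̄(φ a, s ^ q)`. As any point of an ultrametric disk is a centre of it,
proper containment in `D̄(a, r) = D̄(φ a, r)` means `s ^ q < r`. Since distances in `D̄(a, r)` are
at most `r` and `q ≥ 1`, the map `φ` is `s ^ q / r`-Lipschitz, and Banach's theorem applies. -/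

open Filter Function Metric Set Topology
open scoped PowerSeries

section Preliminaries

theorem exists_fixedPt_tendsto_iterate_of_lipschitzOnWith {X : Type*} [MetricSpace X] {φ : X → X}
    {s : Set X} {k : NNReal} (hs : IsComplete s) (hne : s.Nonempty) (hmaps : MapsTo φ s s)
    (hk : k < 1) (hφ : LipschitzOnWith k φ s) :
    ∃ z ∈ s, φ z = z ∧ (∀ w ∈ s, φ w = w → w = z) ∧
      ∀ b ∈ s, Tendsto (fun n ↦ φ^[n] b) atTop (𝓝 z) := by
  have : CompleteSpace s := hs.completeSpace_coe
  have : Nonempty s := hne.to_subtype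
  have hcontr : ContractingWith k (hmaps.restrict φ s s) := ⟨hk, hφ.mapsToRestrict hmaps⟩
  set z := hcontr.fixedPoint
  refine ⟨z, z.2, congrArg Subtype.val hcontr.fixedPoint_isFixedPt, fun w hw hfix ↦ ?_,
    fun b hb ↦ ?_⟩
  · exact congrArg Subtype.val (hcontr.fixedPoint_unique (x := ⟨w, hw⟩) (Subtype.ext hfix))
  · have hlim := tendsto_subtype_rng.1 (hcontr.tendsto_iterate_fixedPoint ⟨b, hb⟩)
    simpa only [MapsTo.iterate_restrict, MapsTo.val_restrict_apply] using hlim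

theorem radius_lt_of_closedBall_ssubset {X : Type*} [PseudoMetricSpace X] [IsUltrametricDist X]
    {x y : X} {r s : ℝ} (h : closedBall y s ⊂ closedBall x r) : s < r := by
  by_contra! hrs
  have hr : 0 ≤ r := nonempty_closedBall.1 (nonempty_of_ssubset' h)
  have hy : y ∈ closedBall x r := h.subset (mem_closedBall_self (hr.trans hrs))
  rw [IsUltrametricDist.closedBall_eq_of_mem hy] at h
  exact h.not_subset (closedBall_subset_closedBall hrs)

variable {X Y : Type*} [PseudoMetricSpace X] [PseudoMetricSpace Y]

theorem image_closedBall_of_dist_eq_rpow {τ : Y → X} {q s : ℝ} (hq : 0 < q)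
    (hsurj : Surjective τ) (hτ : ∀ u v, dist (τ u) (τ v) = dist u v ^ q) (y : Y) (hs : 0 ≤ s) :
    τ '' closedBall y s = closedBall (τ y) (s ^ q) := by
  have hmem (u : Y) : τ u ∈ closedBall (τ y) (s ^ q) ↔ u ∈ closedBall y s := by
    rw [mem_closedBall, mem_closedBall, hτ, Real.rpow_le_rpow_iff dist_nonneg hs hq]
  rw [← image_preimage_eq (closedBall (τ y) (s ^ q)) hsurj]
  exact congrArg _ (Set.ext fun u ↦ (hmem u).symm)

theorem dist_symm_eq_rpow {E F : Type*} [SeminormedAddCommGroup E] [SeminormedAddCommGroup F]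
    {σ : E ≃+ F} {q : ℝ} (hq : q ≠ 0) (hσ : ∀ x, ‖σ x‖ = ‖x‖ ^ (1 / q)) (u v : F) :
    dist (σ.symm u) (σ.symm v) = dist u v ^ q := by
  rw [dist_eq_norm, dist_eq_norm, ← map_sub, ← σ.apply_symm_apply (u - v), hσ, one_div,
    Real.rpow_inv_rpow (norm_nonneg _) hq, σ.apply_symm_apply]

theorem exists_forall_le_forall_lt_of_tendsto {α : Type*} [LinearOrder α] [TopologicalSpace α]
    [OrderTopology α] {u : ℕ → α} {a : α} (hu : Tendsto u atTop (𝓝 a)) {m : ℕ} (hm : a < u m) :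
    ∃ N, (∀ n, u n ≤ u N) ∧ ∀ n, N < n → u n < u N := by
  have hfin : {n | u m ≤ u n}.Finite := by
    have hlt : ∀ᶠ n in cofinite, u n < u m := Nat.cofinite_eq_atTop ▸ hu.eventually_lt_const hm
    simpa only [eventually_cofinite, not_lt] using hlt
  obtain ⟨N, hN, hmax⟩ :=
    exists_max_image {n | u m ≤ u n} (fun n ↦ toLex (u n, n)) hfin ⟨m, le_refl (u m)⟩
  have hlex (n : ℕ) : u n < u N ∨ u n = u N ∧ n ≤ N :=
    (lt_or_ge (u n) (u m)).elim (fun hn ↦ .inl (hn.trans_le hN))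
      fun hn ↦ Prod.Lex.toLex_le_toLex.1 (hmax n hn)
  exact ⟨N, fun n ↦ (hlex n).elim le_of_lt fun h ↦ h.1.le,
    fun n hn ↦ (hlex n).resolve_right fun h ↦ hn.not_ge h.2⟩

theorem norm_pow_sub_pow_mul_le {R : Type*} [SeminormedCommRing R] [NormOneClass R]
    [IsUltrametricDist R] {u v : R} {r : ℝ} (hu : ‖u‖ ≤ r) (hv : ‖v‖ ≤ r) (n : ℕ) :
    ‖u ^ n - v ^ n‖ * r ≤ ‖u - v‖ * r ^ n := by
  have hr : 0 ≤ r := (norm_nonneg u).trans hu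
  induction n with
  | zero => simp
  | succ n ih =>
    have hleft : ‖u * (u ^ n - v ^ n)‖ * r ≤ ‖u - v‖ * r ^ (n + 1) :=
      calc ‖u * (u ^ n - v ^ n)‖ * r ≤ r * (‖u ^ n - v ^ n‖ * r) := by
            rw [← mul_assoc]
            gcongr
            exact norm_mul_le_of_le hu le_rfl
        _ ≤ r * (‖u - v‖ * r ^ n) := by gcongr
        _ = ‖u - v‖ * r ^ (n + 1) := by ring
    have hright : ‖(u - v) * v ^ n‖ * r ≤ ‖u - v‖ * r ^ (n + 1) :=
      calc ‖(u - v) * v ^ n‖ * r ≤ ‖u - v‖ * r ^ n * r := by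
            gcongr
            exact norm_mul_le_of_le le_rfl ((norm_pow_le v n).trans (by gcongr))
        _ = ‖u - v‖ * r ^ (n + 1) := by ring
    calc ‖u ^ (n + 1) - v ^ (n + 1)‖ * r
        = ‖u * (u ^ n - v ^ n) + (u - v) * v ^ n‖ * r := by congr 2; ring
      _ ≤ max ‖u * (u ^ n - v ^ n)‖ ‖(u - v) * v ^ n‖ * r := by
          gcongr
          exact IsUltrametricDist.norm_add_le_max _ _
      _ ≤ ‖u - v‖ * r ^ (n + 1) := by
          rw [max_mul_of_nonneg _ _ hr]
          exact max_le hleft hright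

end Preliminaries

section Polynomial

open Polynomial

variable {K : Type*} [NormedField K] [IsUltrametricDist K] {p : K[X]} {r t : ℝ}

theorem gaussNorm_prod_X_sub_C_le (ht : 0 ≤ t) {s : Multiset K} (hs : ∀ ρ ∈ s, t ≤ ‖ρ‖) :
    (s.map fun ρ ↦ X - C ρ).prod.gaussNorm (NormedField.toAbsoluteValue K) t ≤
      (s.map norm).prod := by
  set v := NormedField.toAbsoluteValue K
  have hv : IsNonarchimedean v := IsUltrametricDist.isNonarchimedean_norm
  induction s using Multiset.induction with
  | empty => simpa using (gaussNorm_C v t (1 : K)).le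
  | cons ρ s ih =>
    rw [Multiset.forall_mem_cons] at hs
    rw [Multiset.map_cons, Multiset.prod_cons, Multiset.map_cons, Multiset.prod_cons]
    have hlinear : (X - C ρ).gaussNorm v t ≤ ‖ρ‖ :=
      calc (X - C ρ).gaussNorm v t = (monomial 1 1 + C (-ρ)).gaussNorm v t := by
            rw [C_neg, monomial_one_one_eq_X, sub_eq_add_neg]
        _ ≤ max ((monomial 1 (1 : K)).gaussNorm v t) ((C (-ρ)).gaussNorm v t) :=
            isNonarchimedean_gaussNorm v hv ht _ _
        _ ≤ ‖ρ‖ := by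
            rw [gaussNorm_monomial, gaussNorm_C]
            simpa [v, NormedField.toAbsoluteValue] using hs.1
    exact (gaussNorm_mul_le v hv _ _ ht).trans
      (mul_le_mul hlinear (ih hs.2) (gaussNorm_nonneg v _ ht) (norm_nonneg ρ))

theorem gaussNorm_le_norm_coeff_zero_of_splits (hp : p.Splits) (ht : 0 ≤ t)
    (hroots : ∀ ρ ∈ p.roots, t ≤ ‖ρ‖) :
    p.gaussNorm (NormedField.toAbsoluteValue K) t ≤ ‖p.coeff 0‖ := by
  set v := NormedField.toAbsoluteValue K
  have hv : IsNonarchimedean v := IsUltrametricDist.isNonarchimedean_norm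
  have hcoeff : ‖p.coeff 0‖ = ‖p.leadingCoeff‖ * (p.roots.map norm).prod := by
    have hprod : ‖p.roots.prod‖ = (p.roots.map norm).prod := map_multiset_prod normHom p.roots
    rw [hp.coeff_zero_eq_leadingCoeff_mul_prod_roots, norm_mul, norm_mul, hprod]
    simp
  conv_lhs => rw [hp.eq_prod_roots]
  rw [hcoeff]
  refine (gaussNorm_mul_le v hv _ _ ht).trans ?_
  rw [gaussNorm_C]
  exact mul_le_mul_of_nonneg_left (gaussNorm_prod_X_sub_C_le ht hroots) (v.nonneg _)

theorem exists_isRoot_norm_coeff_mul_pow_le (hp : p.Splits) {N : ℕ} (hN : N ≠ 0)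
    (hcoeff : p.coeff N ≠ 0) :
    ∃ ρ, p.IsRoot ρ ∧ ‖p.coeff N‖ * ‖ρ‖ ^ N ≤ ‖p.coeff 0‖ := by
  have hroots : p.roots ≠ 0 := by
    rw [← Multiset.card_pos, ← hp.natDegree_eq_card_roots]
    exact hN.bot_lt.trans_le (le_natDegree_of_ne_zero hcoeff)
  obtain ⟨ρ, hρ, hmin⟩ := Multiset.exists_min_image norm hroots
  exact ⟨ρ, isRoot_of_mem_roots hρ, (p.le_gaussNorm _ (norm_nonneg ρ) N).trans
    (gaussNorm_le_norm_coeff_zero_of_splits hp (norm_nonneg ρ) hmin)⟩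

theorem norm_coeff_taylor_eq_of_forall_lt {x : K} {N : ℕ} (hr : 0 < r) (hx : ‖x‖ ≤ r)
    (hlt : ∀ n, N < n → ‖p.coeff n‖ * r ^ n < ‖p.coeff N‖ * r ^ N) :
    ‖(taylor x p).coeff N‖ = ‖p.coeff N‖ := by
  have hdom (i : ℕ) (hi : i ≠ 0) :
      ‖(hasseDeriv N p).coeff i * x ^ i‖ < ‖(hasseDeriv N p).coeff 0 * x ^ 0‖ := by
    refine lt_of_mul_lt_mul_right ?_ (pow_nonneg hr.le N)
    calc ‖(hasseDeriv N p).coeff i * x ^ i‖ * r ^ N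
        = ‖((i + N).choose N : K)‖ * ‖p.coeff (i + N)‖ * ‖x‖ ^ i * r ^ N := by
          rw [hasseDeriv_coeff, norm_mul, norm_mul, norm_pow]
      _ ≤ 1 * ‖p.coeff (i + N)‖ * r ^ i * r ^ N := by
          gcongr
          exact IsUltrametricDist.norm_natCast_le_one K _
      _ = ‖p.coeff (i + N)‖ * r ^ (i + N) := by rw [pow_add]; ring
      _ < ‖p.coeff N‖ * r ^ N := hlt _ (by lia)
      _ = ‖(hasseDeriv N p).coeff 0 * x ^ 0‖ * r ^ N := by simp [hasseDeriv_coeff]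
  have hsum := IsUltrametricDist.isNonarchimedean_norm.apply_sum_eq_of_lt
    (fun y : K ↦ (norm_neg y).symm)
    (Finset.mem_range.2 (Nat.succ_pos (hasseDeriv N p).natDegree)) fun i _ hi ↦ hdom i hi
  rw [taylor_coeff, eval_eq_sum_range, hsum]
  simp [hasseDeriv_coeff]

theorem exists_isRoot_norm_coeff_mul_norm_sub_pow_le [IsAlgClosed K] {x : K} {N : ℕ} (hN : N ≠ 0)
    (hr : 0 < r) (hx : ‖x‖ ≤ r)
    (hlt : ∀ n, N < n → ‖p.coeff n‖ * r ^ n < ‖p.coeff N‖ * r ^ N) :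
    ∃ y, p.IsRoot y ∧ ‖p.coeff N‖ * ‖y - x‖ ^ N ≤ ‖p.eval x‖ := by
  have hcoeff : ‖(taylor x p).coeff N‖ = ‖p.coeff N‖ := norm_coeff_taylor_eq_of_forall_lt hr hx hlt
  have hcoeff_pos : 0 < ‖p.coeff N‖ :=
    pos_of_mul_pos_left ((by positivity : 0 ≤ ‖p.coeff (N + 1)‖ * r ^ (N + 1)).trans_lt
      (hlt (N + 1) N.lt_succ_self)) (by positivity)
  obtain ⟨ρ, hρ, hle⟩ := exists_isRoot_norm_coeff_mul_pow_le (IsAlgClosed.splits (taylor x p)) hN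
    (norm_pos_iff.1 (hcoeff ▸ hcoeff_pos))
  rw [IsRoot, taylor_eval] at hρ
  refine ⟨ρ + x, hρ, ?_⟩
  simpa [hcoeff] using hle

end Polynomial

section PowerSeries

open PowerSeries

variable {K : Type*} [NormedField K] {f : K⟦X⟧} {r : ℝ}

/-- The value at `x` of the power series `f`, as an unconditional sum; it is `0` when the series
diverges at `x`. -/
noncomputable def evalSum (f : K⟦X⟧) (x : K) : K := ∑' n, coeff n f * x ^ n

theorem evalSum_zero_right : evalSum f 0 = constantCoeff f := by
  rw [evalSum, tsum_eq_single 0 fun n hn ↦ by simp [hn]]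
  simp

theorem isRestricted_sub_C (hf : IsRestricted r f) (w : K) : IsRestricted r (f - C w) :=
  sub_eq_add_neg f (C w) ▸ isRestricted.add r hf (isRestricted.neg r (isRestricted_C r w))

theorem hasGaussNorm_of_isRestricted (hf : IsRestricted r f) : HasGaussNorm norm r f :=
  ((isRestricted_iff' r f).1 hf).bddAbove_range

theorem norm_coeff_mul_pow_le {x : K} (hx : ‖x‖ ≤ r) (n : ℕ) :
    ‖coeff n f * x ^ n‖ ≤ ‖coeff n f‖ * r ^ n := by
  rw [norm_mul, norm_pow]
  gcongr

theorem eval_trunc_eq_sum (M : ℕ) (x : K) :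
    (trunc M f).eval x = ∑ n ∈ Finset.range M, coeff n f * x ^ n :=
  eval₂_trunc_eq_sum_range x (RingHom.id K) M f

/-- The radius of the disk onto which `f` maps the closed disk of radius `r` about `0`: the Gauss
norm of `f` with its constant term removed. -/
noncomputable def imageRadius (f : K⟦X⟧) (r : ℝ) : ℝ :=
  gaussNorm norm r (f - C (constantCoeff f))

theorem imageRadius_nonneg : 0 ≤ imageRadius f r := gaussNorm_nonneg norm r _ norm_nonneg

/-- `N` is the Weierstrass degree of `f` on the closed disk of radius `r`: the last index at which
`‖coeff n f‖ * r ^ n` is maximal. For a restricted series over a complete algebraically closed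
ultrametric field it is the number of zeros of `f` in the disk, with multiplicity. -/
structure IsWeierstrassDegree (f : K⟦X⟧) (r : ℝ) (N : ℕ) : Prop where
  le (n : ℕ) : ‖coeff n f‖ * r ^ n ≤ ‖coeff N f‖ * r ^ N
  lt (n : ℕ) (hn : N < n) : ‖coeff n f‖ * r ^ n < ‖coeff N f‖ * r ^ N

theorem exists_isWeierstrassDegree (hr : 0 < r) (hf : IsRestricted r f) (hf0 : f ≠ 0) :
    ∃ N, IsWeierstrassDegree f r N := by
  obtain ⟨m, hm⟩ := exists_coeff_ne_zero_iff_ne_zero.2 hf0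
  obtain ⟨N, hle, hlt⟩ := exists_forall_le_forall_lt_of_tendsto ((isRestricted_iff' r f).1 hf)
    (m := m) (by positivity)
  exact ⟨N, hle, hlt⟩

namespace IsWeierstrassDegree

variable {N : ℕ}

theorem norm_coeff_pos (h : IsWeierstrassDegree f r N) (hr : 0 ≤ r) : 0 < ‖coeff N f‖ :=
  pos_of_mul_pos_left ((by positivity : 0 ≤ ‖coeff (N + 1) f‖ * r ^ (N + 1)).trans_lt
    (h.lt (N + 1) N.lt_succ_self)) (by positivity)

theorem gaussNorm_eq (h : IsWeierstrassDegree f r N) :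
    gaussNorm norm r f = ‖coeff N f‖ * r ^ N := by
  rw [PowerSeries.gaussNorm_eq]
  exact le_antisymm (ciSup_le h.le) (le_ciSup ⟨_, forall_mem_range.2 h.le⟩ N)

end IsWeierstrassDegree

variable [IsUltrametricDist K]

section Complete

variable [CompleteSpace K]

theorem summable_coeff_mul_pow (hf : IsRestricted r f) {x : K} (hx : ‖x‖ ≤ r) :
    Summable fun n ↦ coeff n f * x ^ n :=
  NonarchimedeanAddGroup.summable_of_tendsto_cofinite_zero <|
    squeeze_zero_norm (norm_coeff_mul_pow_le hx) ((isRestricted_iff r f).1 hf)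

theorem norm_evalSum_sub_le (hr : 0 < r) (hf : IsRestricted r f) {u v : K} (hu : ‖u‖ ≤ r)
    (hv : ‖v‖ ≤ r) : ‖evalSum f u - evalSum f v‖ ≤ gaussNorm norm r f * (‖u - v‖ / r) := by
  have hs : 0 ≤ gaussNorm norm r f := gaussNorm_nonneg norm r f norm_nonneg
  rw [evalSum, evalSum,
    ← (summable_coeff_mul_pow hf hu).tsum_sub (summable_coeff_mul_pow hf hv)]
  refine IsUltrametricDist.norm_tsum_le_of_forall_le_of_nonneg (by positivity) fun n ↦ ?_
  calc ‖coeff n f * u ^ n - coeff n f * v ^ n‖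
      = ‖coeff n f‖ * (‖u ^ n - v ^ n‖ * r) / r := by
        rw [← mul_sub, norm_mul]
        field_simp
    _ ≤ ‖coeff n f‖ * (‖u - v‖ * r ^ n) / r := by
        gcongr ‖coeff n f‖ * ?_ / r
        exact norm_pow_sub_pow_mul_le hu hv n
    _ = ‖coeff n f‖ * r ^ n * (‖u - v‖ / r) := by ring
    _ ≤ gaussNorm norm r f * (‖u - v‖ / r) := by
        gcongr
        exact le_gaussNorm norm r f (hasGaussNorm_of_isRestricted hf) n

theorem evalSum_sub_C (hf : IsRestricted r f) {x : K} (hx : ‖x‖ ≤ r) (w : K) :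
    evalSum (f - C w) x = evalSum f x - w := by
  have hC : HasSum (fun n ↦ coeff n (C w) * x ^ n) w := by
    simpa using hasSum_single (f := fun n ↦ coeff n (C w) * x ^ n) 0 fun n hn ↦ by
      simp [coeff_C, hn]
  have hsub := (summable_coeff_mul_pow hf hx).hasSum.sub hC
  simp only [← sub_mul, ← map_sub] at hsub
  exact hsub.tsum_eq

theorem norm_evalSum_sub_eval_trunc_le (hf : IsRestricted r f) {M : ℕ} {ε : ℝ} (hε : 0 ≤ ε)
    (hM : ∀ n, M ≤ n → ‖coeff n f‖ * r ^ n ≤ ε) {x : K} (hx : ‖x‖ ≤ r) :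
    ‖evalSum f x - (trunc M f).eval x‖ ≤ ε := by
  rw [evalSum, eval_trunc_eq_sum, ← (summable_coeff_mul_pow hf hx).sum_add_tsum_nat_add M,
    add_sub_cancel_left]
  exact IsUltrametricDist.norm_tsum_le_of_forall_le_of_nonneg hε fun n ↦
    (norm_coeff_mul_pow_le hx _).trans (hM _ (Nat.le_add_left M n))

theorem tendstoUniformlyOn_eval_trunc (hf : IsRestricted r f) :
    TendstoUniformlyOn (fun M x ↦ (trunc M f).eval x) (evalSum f) atTop (closedBall 0 r) := by
  refine Metric.tendstoUniformlyOn_iff.2 fun ε hε ↦ ?_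
  obtain ⟨M₀, hM₀⟩ := eventually_atTop.1
    (((isRestricted_iff' r f).1 hf).eventually_le_const (half_pos hε))
  filter_upwards [eventually_ge_atTop M₀] with M hM x hx
  rw [dist_eq_norm]
  exact (norm_evalSum_sub_eval_trunc_le hf (half_pos hε).le (fun n hn ↦ hM₀ n (hM.trans hn))
    (mem_closedBall_zero_iff.1 hx)).trans_lt (half_lt_self hε)

theorem continuousOn_evalSum (hf : IsRestricted r f) : ContinuousOn (evalSum f) (closedBall 0 r) :=
  (tendstoUniformlyOn_eval_trunc hf).continuousOn
    (.of_forall fun M ↦ (trunc M f).continuous.continuousOn)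

end Complete

namespace IsWeierstrassDegree

variable {N : ℕ}

theorem sub_C (h : IsWeierstrassDegree f r N) (hN : N ≠ 0) {w : K}
    (hw : ‖w‖ ≤ ‖coeff N f‖ * r ^ N) : IsWeierstrassDegree (f - C w) r N := by
  have hcoeff {n : ℕ} (hn : n ≠ 0) : coeff n (f - C w) = coeff n f := by simp [coeff_C, hn]
  refine ⟨fun n ↦ ?_, fun n hn ↦ ?_⟩
  · rw [hcoeff hN]
    rcases eq_or_ne n 0 with rfl | hn
    · calc ‖coeff 0 (f - C w)‖ * r ^ 0 = ‖coeff 0 f + -w‖ := by simp [sub_eq_add_neg]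
        _ ≤ max ‖coeff 0 f‖ ‖-w‖ := IsUltrametricDist.norm_add_le_max _ _
        _ ≤ ‖coeff N f‖ * r ^ N := max_le (by simpa using h.le 0) (by rwa [norm_neg])
    · exact hcoeff hn ▸ h.le n
  · rw [hcoeff hN, hcoeff (Nat.ne_zero_of_lt hn)]
    exact h.lt n hn

variable [IsAlgClosed K]

theorem exists_isRoot_trunc (h : IsWeierstrassDegree f r N) (hN : N ≠ 0) (hr : 0 < r) {M : ℕ}
    (hM : N < M) {x : K} (hx : ‖x‖ ≤ r) :
    ∃ y, ‖y‖ ≤ r ∧ (trunc M f).IsRoot y ∧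
      ‖coeff N f‖ * ‖y - x‖ ^ N ≤ ‖(trunc M f).eval x‖ := by
  have hcoeff : (trunc M f).coeff N = coeff N f := by rw [coeff_trunc, if_pos hM]
  have hpos : 0 < ‖coeff N f‖ * r ^ N := mul_pos (h.norm_coeff_pos hr.le) (pow_pos hr N)
  obtain ⟨y, hroot, hy⟩ := exists_isRoot_norm_coeff_mul_norm_sub_pow_le (p := trunc M f) hN hr hx
    fun n hn ↦ by
      rw [hcoeff, coeff_trunc]
      split_ifs
      · exact h.lt n hn
      · simpa using hpos
  rw [hcoeff] at hy
  have heval : ‖(trunc M f).eval x‖ ≤ ‖coeff N f‖ * r ^ N := by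
    rw [eval_trunc_eq_sum]
    exact IsUltrametricDist.norm_sum_le_of_forall_le_of_nonneg hpos.le fun n _ ↦
      (norm_coeff_mul_pow_le hx n).trans (h.le n)
  have hdist : ‖y - x‖ ≤ r := le_of_pow_le_pow_left₀ hN hr.le
    (le_of_mul_le_mul_left (hy.trans heval) (h.norm_coeff_pos hr.le))
  refine ⟨y, ?_, hroot, hy⟩
  simpa using (IsUltrametricDist.norm_add_le_max (y - x) x).trans (max_le hdist hx)

theorem exists_seq_isRoot_trunc (h : IsWeierstrassDegree f r N) (hN : N ≠ 0) (hr : 0 < r) :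
    ∃ x : ℕ → K, ∀ k, ‖x k‖ ≤ r ∧ (trunc (N + 1 + k) f).IsRoot (x k) ∧
      ‖coeff N f‖ * ‖x (k + 1) - x k‖ ^ N ≤ ‖coeff (N + 1 + k) f‖ * r ^ (N + 1 + k) := by
  choose! next hnext_mem hnext_root hnext_dist using fun (k : ℕ) (x : K) (hx : ‖x‖ ≤ r) ↦
    h.exists_isRoot_trunc hN hr (M := N + 1 + k) (by lia) hx
  let x : ℕ → K := Nat.rec (next 0 0) fun k ↦ next (k + 1)
  have hmem (k : ℕ) : ‖x k‖ ≤ r := by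
    induction k with
    | zero => exact hnext_mem 0 0 (by simpa using hr.le)
    | succ k ih => exact hnext_mem (k + 1) _ ih
  have hroot (k : ℕ) : (trunc (N + 1 + k) f).IsRoot (x k) := by
    cases k with
    | zero => exact hnext_root 0 0 (by simpa using hr.le)
    | succ k => exact hnext_root (k + 1) _ (hmem k)
  refine ⟨x, fun k ↦ ⟨hmem k, hroot k, ?_⟩⟩
  have heval : (trunc (N + 1 + (k + 1)) f).eval (x k) =
      coeff (N + 1 + k) f * x k ^ (N + 1 + k) := by
    rw [eval_trunc_eq_sum, ← add_assoc, Finset.sum_range_succ, ← eval_trunc_eq_sum, hroot k,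
      zero_add]
  exact (heval ▸ hnext_dist (k + 1) _ (hmem k)).trans (norm_coeff_mul_pow_le (hmem k) _)

variable [CompleteSpace K]

theorem exists_evalSum_eq_zero (h : IsWeierstrassDegree f r N) (hN : N ≠ 0) (hr : 0 < r)
    (hf : IsRestricted r f) : ∃ z ∈ closedBall 0 r, evalSum f z = 0 := by
  obtain ⟨x, hx⟩ := h.exists_seq_isRoot_trunc hN hr
  have hindex : Tendsto (fun k ↦ N + 1 + k) atTop atTop :=
    tendsto_atTop_mono (fun k ↦ Nat.le_add_left k _) tendsto_id
  have hbound :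
      Tendsto (fun k ↦ ‖coeff (N + 1 + k) f‖ * r ^ (N + 1 + k) / ‖coeff N f‖) atTop (𝓝 0) := by
    simpa using (((isRestricted_iff' r f).1 hf).comp hindex).div_const ‖coeff N f‖
  have hpow : Tendsto (fun k ↦ ‖x (k + 1) - x k‖ ^ N) atTop (𝓝 0) :=
    squeeze_zero (fun k ↦ by positivity)
      (fun k ↦ (le_div_iff₀' (h.norm_coeff_pos hr.le)).2 (hx k).2.2) hbound
  have hdiff : Tendsto (fun k ↦ x (k + 1) - x k) atTop (𝓝 0) := by
    refine NormedAddGroup.tendsto_nhds_zero.2 fun ε hε ↦ ?_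
    filter_upwards [hpow.eventually_lt_const (pow_pos hε N)] with k hk
    exact lt_of_pow_lt_pow_left₀ N hε.le hk
  obtain ⟨z, hz⟩ := cauchySeq_tendsto_of_complete
    (NonarchimedeanAddGroup.cauchySeq_of_tendsto_sub_nhds_zero hdiff)
  have hx_mem (k : ℕ) : x k ∈ closedBall 0 r := mem_closedBall_zero_iff.2 (hx k).1
  have hz_mem : z ∈ closedBall 0 r := isClosed_closedBall.mem_of_tendsto hz (.of_forall hx_mem)
  have hlim := ((tendstoUniformlyOn_eval_trunc hf).seq_tendstoUniformlyOn _ hindex).tendsto_comp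
    (continuousOn_evalSum hf z hz_mem)
    (tendsto_nhdsWithin_iff.2 ⟨hz, .of_forall hx_mem⟩)
  refine ⟨z, hz_mem, tendsto_nhds_unique hlim ?_⟩
  exact tendsto_const_nhds.congr fun k ↦ (hx k).2.1.symm

end IsWeierstrassDegree

section Image

variable [CompleteSpace K]

theorem dist_evalSum_le (hr : 0 < r) (hf : IsRestricted r f) {u v : K} (hu : ‖u‖ ≤ r)
    (hv : ‖v‖ ≤ r) : dist (evalSum f u) (evalSum f v) ≤ imageRadius f r * (dist u v / r) := by
  rw [dist_eq_norm, dist_eq_norm, ← sub_sub_sub_cancel_right _ _ (constantCoeff f),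
    ← evalSum_sub_C hf hu, ← evalSum_sub_C hf hv]
  exact norm_evalSum_sub_le hr (isRestricted_sub_C hf _) hu hv

theorem mapsTo_evalSum_closedBall (hr : 0 < r) (hf : IsRestricted r f) :
    MapsTo (evalSum f) (closedBall 0 r) (closedBall (constantCoeff f) (imageRadius f r)) := by
  intro x hx
  rw [mem_closedBall, ← evalSum_zero_right]
  refine (dist_evalSum_le hr hf (mem_closedBall_zero_iff.1 hx) (by simpa using hr.le)).trans ?_
  exact mul_le_of_le_one_right imageRadius_nonneg ((div_le_one hr).2 hx)

theorem surjOn_evalSum_closedBall [IsAlgClosed K] (hr : 0 < r) (hf : IsRestricted r f) :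
    SurjOn (evalSum f) (closedBall 0 r) (closedBall (constantCoeff f) (imageRadius f r)) := by
  intro w hw
  rw [mem_closedBall_iff_norm, imageRadius] at hw
  set g := f - C (constantCoeff f) with hg_def
  have hg : IsRestricted r g := isRestricted_sub_C hf _
  rcases eq_or_ne g 0 with hg0 | hg0
  · rw [hg0, gaussNorm_zero norm r norm_zero, norm_le_zero_iff, sub_eq_zero] at hw
    exact ⟨0, mem_closedBall_self hr.le, evalSum_zero_right.trans hw.symm⟩
  · obtain ⟨N, hN⟩ := exists_isWeierstrassDegree hr hg hg0
    have hN0 : N ≠ 0 := by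
      rintro rfl
      simpa [hg_def] using hN.norm_coeff_pos hr.le
    obtain ⟨z, hz, hzero⟩ := (hN.sub_C hN0 (hN.gaussNorm_eq ▸ hw)).exists_evalSum_eq_zero hN0 hr
      (isRestricted_sub_C hg _)
    have hz_norm : ‖z‖ ≤ r := mem_closedBall_zero_iff.1 hz
    rw [evalSum_sub_C hg hz_norm, evalSum_sub_C hf hz_norm, sub_sub_sub_cancel_right,
      sub_eq_zero] at hzero
    exact ⟨z, hz, hzero⟩

theorem image_evalSum_closedBall [IsAlgClosed K] (hr : 0 < r) (hf : IsRestricted r f) :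
    evalSum f '' closedBall 0 r = closedBall (constantCoeff f) (imageRadius f r) :=
  (surjOn_evalSum_closedBall hr hf).image_eq_of_mapsTo (mapsTo_evalSum_closedBall hr hf)

end Image

end PowerSeries

section SkewProduct

open PowerSeries

variable {K : Type*} [NormedField K] [CompleteSpace K] [IsUltrametricDist K] {f : K⟦X⟧}
  {Y : Type*} [PseudoMetricSpace Y] {τ : K → Y} {q r : ℝ}

theorem image_comp_evalSum_closedBall [IsAlgClosed K] (hq : 0 < q) (hτs : Surjective τ)
    (hτ : ∀ x y, dist (τ x) (τ y) = dist x y ^ q) (hr : 0 < r) (hf : IsRestricted r f)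
    (a : K) :
    (fun b ↦ τ (evalSum f (b - a))) '' closedBall a r =
      closedBall (τ (constantCoeff f)) (imageRadius f r ^ q) := by
  have htranslate : (fun b ↦ b - a) '' closedBall a r = closedBall 0 r := by
    simpa using (IsometryEquiv.subRight a).image_closedBall a r
  rw [← image_closedBall_of_dist_eq_rpow hq hτs hτ _ imageRadius_nonneg,
    ← image_evalSum_closedBall hr hf, ← htranslate, image_image, image_image]

theorem lipschitzOnWith_comp_evalSum (hq : 1 ≤ q)
    (hτ : ∀ x y, dist (τ x) (τ y) = dist x y ^ q) (hr : 0 < r) (hf : IsRestricted r f)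
    (a : K) :
    LipschitzOnWith (imageRadius f r ^ q / r).toNNReal (fun b ↦ τ (evalSum f (b - a)))
      (closedBall a r) := by
  have hs : 0 ≤ imageRadius f r := imageRadius_nonneg
  refine LipschitzOnWith.of_dist_le_mul fun u hu v hv ↦ ?_
  have hratio : dist u v / r ≤ 1 :=
    (div_le_one hr).2 ((IsUltrametricDist.closedBall_eq_of_mem hv).le hu)
  rw [Real.coe_toNNReal _ (by positivity), hτ]
  calc dist (evalSum f (u - a)) (evalSum f (v - a)) ^ q
      ≤ (imageRadius f r * (dist u v / r)) ^ q := by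
        gcongr
        simpa using
          dist_evalSum_le hr hf (mem_closedBall_iff_norm.1 hu) (mem_closedBall_iff_norm.1 hv)
    _ = imageRadius f r ^ q * (dist u v / r) ^ q := Real.mul_rpow hs (by positivity)
    _ ≤ imageRadius f r ^ q * (dist u v / r) := by
        gcongr
        exact Real.rpow_le_self_of_le_one (by positivity) hratio hq
    _ = imageRadius f r ^ q / r * dist u v := by ring

end SkewProduct

theorem stmt14_general {K : Type*} [NormedField K] [CompleteSpace K] [IsUltrametricDist K]
    [IsAlgClosed K] {q : ℝ} (hq : 1 ≤ q) {τ : K → K} (hτs : Surjective τ)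
    (hτ : ∀ x y, dist (τ x) (τ y) = dist x y ^ q) (a : K) {r : ℝ} (hr : 0 < r) {c : ℕ → K}
    (hc : Tendsto (fun n ↦ ‖c n‖ * r ^ n) atTop (𝓝 0)) :
    let φ : K → K := fun b ↦ τ (∑' n, c n * (b - a) ^ n)
    φ '' closedBall a r ⊂ closedBall a r →
    ∃ z ∈ closedBall a r, φ z = z ∧ (∀ w ∈ closedBall a r, φ w = w → w = z) ∧
      ∀ b ∈ closedBall a r, Tendsto (fun n ↦ φ^[n] b) atTop (𝓝 z) := by
  intro φ hφ
  set f : K⟦X⟧ := .mk c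
  have hf : PowerSeries.IsRestricted r f := (PowerSeries.isRestricted_iff' r f).2 (by simpa [f])
  have hφ_eq : φ = fun b ↦ τ (evalSum f (b - a)) := by simp [φ, f, evalSum]
  have hradius : imageRadius f r ^ q < r := by
    rw [hφ_eq, image_comp_evalSum_closedBall (zero_lt_one.trans_le hq) hτs hτ hr hf] at hφ
    exact radius_lt_of_closedBall_ssubset hφ
  refine exists_fixedPt_tendsto_iterate_of_lipschitzOnWith isClosed_closedBall.isComplete
    (nonempty_closedBall.2 hr.le) (mapsTo_iff_image_subset.2 hφ.subset) ?_
    (hφ_eq ▸ lipschitzOnWith_comp_evalSum hq hτ hr hf a)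
  rw [Real.toNNReal_lt_one, div_lt_one hr]
  exact hradius

/-- Attracting fixed points of a skew product with scale factor `q ≥ 1` on a closed disk:
if `σ` is an automorphism of a complete algebraically closed nonarchimedean field with
`‖σ a‖ = ‖a‖^(1/q)`, `f` is a power series converging on the closed disk `D̄(a,r)`, and
`φ = σ⁻¹ ∘ f` maps `D̄(a,r)` to a proper subset of itself, then `φ` has a unique fixed
point `z` in `D̄(a,r)` and the iterates of every point of `D̄(a,r)` converge to `z`. -/
theorem stmt14 {K : Type*} [NormedField K] [CompleteSpace K] [IsUltrametricDist K]
    [IsAlgClosed K]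
    (q : ℝ) (hq : 1 ≤ q) (σ : K ≃+* K) (hσ : ∀ a : K, ‖σ a‖ = ‖a‖ ^ (1 / q))
    (a : K) (r : ℝ) (hr : 0 < r) (c : ℕ → K)
    (hc : Filter.Tendsto (fun n => ‖c n‖ * r ^ n) Filter.atTop (nhds 0)) :
    let φ : K → K := fun b => σ.symm (∑' n : ℕ, c n * (b - a) ^ n)
    φ '' Metric.closedBall a r ⊂ Metric.closedBall a r →
    ∃ z ∈ Metric.closedBall a r, φ z = z ∧
      (∀ w ∈ Metric.closedBall a r, φ w = w → w = z) ∧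
      ∀ b ∈ Metric.closedBall a r,
        Filter.Tendsto (fun n => φ^[n] b) Filter.atTop (nhds z) :=
  stmt14_general hq σ.symm.surjective
    (dist_symm_eq_rpow (σ := σ.toAddEquiv) (by positivity) hσ) a hr hc
end
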